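/- The set SKYLINECONCEPTS(r) of Skyline concepts of r, ordered by (C₁, σ₁) ≤ (C₂, σ₂) iff C₁ ⊆ C₂, is a complete lattice, and the map (C, π) ↦ (C, Π-S_C(π)) is an order isomorphism from the agree concepts lattice AGREECONCEPTS(r) onto SKYLINECONCEPTS(r). -/

import Mathlib

/-! The criterion sets `C` with `C = hCl C` are the closed sets of a closure operator: a
criterion lies in `hCl C` exactly when it belongs to `𝒞` and agreement of two tuples on `C`
forces agreement on it (`mem_hCl`). An agree concept is determined by its intent, and so is a
Skyline concept, because the partition occurring in it is `g` of its intent; intents range over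
the closed sets in both cases. So each of the two ordered sets is a copy of the closed sets
ordered by inclusion, and the given map is the identity on intents, hence an order isomorphism.
Relative to `𝒞`, closed sets are stable under arbitrary intersections (`hCl_sInter`), which
provides all infima and therefore a complete lattice. -/

/-- Two tuples agree on a set `C` of criteria when their values coincide on every `c ∈ C`. -/
def AgreeOn {T Crit : Type*} (val : T → Crit → ℝ) (C : Set Crit) (t t' : T) : Prop :=
  ∀ c ∈ C, val t c = val t' c

/-- `π` is a partition of the set `r`: a family of nonempty pairwise disjoint sets whose
union is `r`. -/
def IsPartitionOf {T : Type*} (r : Set T) (π : Set (Set T)) : Prop :=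
  (∀ X ∈ π, X.Nonempty) ∧ (∀ X ∈ π, ∀ Y ∈ π, X ≠ Y → Disjoint X Y) ∧ ⋃₀ π = r

/-- Refinement order on partitions: every class of `π` is contained in some class of `π'`. -/
def Refines {T : Type*} (π π' : Set (Set T)) : Prop := ∀ X ∈ π, ∃ Y ∈ π', X ⊆ Y

/-- `gPart val r C` is the partition of `r` into equivalence classes of agreement on `C`. -/
def gPart {T Crit : Type*} (val : T → Crit → ℝ) (r : Set T) (C : Set Crit) : Set (Set T) :=
  {X | ∃ t ∈ r, X = {t' ∈ r | AgreeOn val C t t'}}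

/-- `fCrit val 𝒞 π` is the set of criteria of `𝒞` on which any two tuples lying in a common
class of `π` agree. -/
def fCrit {T Crit : Type*} (val : T → Crit → ℝ) (𝒞 : Set Crit) (π : Set (Set T)) : Set Crit :=
  {c ∈ 𝒞 | ∀ X ∈ π, ∀ t ∈ X, ∀ t' ∈ X, val t c = val t' c}

/-- The closure operator `h = f ∘ g` on criterion sets. -/
def hCl {T Crit : Type*} (val : T → Crit → ℝ) (𝒞 : Set Crit) (r : Set T) (C : Set Crit) :
    Set Crit :=
  fCrit val 𝒞 (gPart val r C)

/-- `t'` dominates `t` on `C` (all preferences minimized). -/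
def Dominates {T Crit : Type*} (val : T → Crit → ℝ) (C : Set Crit) (t' t : T) : Prop :=
  (∀ c ∈ C, val t' c ≤ val t c) ∧ ∃ c ∈ C, val t' c < val t c

/-- The Skyline of `r` on the criterion set `C`: tuples of `r` dominated by no tuple of `r`. -/
def Skyline {T Crit : Type*} (val : T → Crit → ℝ) (C : Set Crit) (r : Set T) : Set T :=
  {t ∈ r | ∀ t' ∈ r, ¬ Dominates val C t' t}

/-- The disagree condition: no two distinct tuples of `r` agree on all criteria of `C`. -/
def DAC {T Crit : Type*} (val : T → Crit → ℝ) (C : Set Crit) (r : Set T) : Prop :=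
  ∀ t ∈ r, ∀ t' ∈ r, t ≠ t' → ¬ AgreeOn val C t t'

/-- `Π-S_C(π)`: the classes of `π` whose tuples belong to the Skyline on `C`. -/
def PiS {T Crit : Type*} (val : T → Crit → ℝ) (C : Set Crit) (r : Set T)
    (π : Set (Set T)) : Set (Set T) :=
  {X ∈ π | X ⊆ Skyline val C r}

/-- An agree concept of `r`: a pair `(C, π)` with `π = g(C)` and `C = f(π)`. -/
structure AgreeConcept {T Crit : Type*} (val : T → Crit → ℝ) (𝒞 : Set Crit) (r : Set T) where
  intent : Set Crit
  extent : Set (Set T)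
  extent_eq : extent = gPart val r intent
  intent_eq : intent = fCrit val 𝒞 extent

/-- A Skyline concept of `r`: a pair `(C, Π-S_C(π))` for `(C, π)` an agree concept. -/
structure SkylineConcept {T Crit : Type*} (val : T → Crit → ℝ) (𝒞 : Set Crit) (r : Set T) where
  intent : Set Crit
  extent : Set (Set T)
  isSkylineConcept : ∃ π : Set (Set T), π = gPart val r intent ∧
    intent = fCrit val 𝒞 π ∧ extent = PiS val intent r π

/-- Agree concepts are ordered by inclusion of intents. -/
instance {T Crit : Type*} (val : T → Crit → ℝ) (𝒞 : Set Crit) (r : Set T) :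
    LE (AgreeConcept val 𝒞 r) :=
  ⟨fun a b => a.intent ⊆ b.intent⟩

/-- Skyline concepts are ordered by inclusion of intents. -/
instance {T Crit : Type*} (val : T → Crit → ℝ) (𝒞 : Set Crit) (r : Set T) :
    LE (SkylineConcept val 𝒞 r) :=
  ⟨fun a b => a.intent ⊆ b.intent⟩

section

variable {T Crit : Type*} {val : T → Crit → ℝ} {𝒞 : Set Crit} {r : Set T}

theorem mem_hCl {C : Set Crit} {c : Crit} :
    c ∈ hCl val 𝒞 r C ↔
      c ∈ 𝒞 ∧ ∀ t ∈ r, ∀ t' ∈ r, AgreeOn val C t t' → val t c = val t' c := by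
  constructor
  · rintro ⟨hc, h⟩
    exact ⟨hc, fun t ht t' ht' hag => h _ ⟨t, ht, rfl⟩ t ⟨ht, fun _ _ => rfl⟩ t' ⟨ht', hag⟩⟩
  · rintro ⟨hc, h⟩
    refine ⟨hc, ?_⟩
    rintro X ⟨s, hs, rfl⟩ t ⟨ht, hst⟩ t' ⟨ht', hst'⟩
    exact (h s hs t ht hst).symm.trans (h s hs t' ht' hst')

theorem hCl_mono {C D : Set Crit} (h : C ⊆ D) : hCl val 𝒞 r C ⊆ hCl val 𝒞 r D := by
  intro c hc
  rw [mem_hCl] at hc ⊢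
  exact ⟨hc.1, fun t ht t' ht' hag => hc.2 t ht t' ht' fun d hd => hag d (h hd)⟩

theorem subset_hCl {C : Set Crit} (h : C ⊆ 𝒞) : C ⊆ hCl val 𝒞 r C := fun c hc =>
  mem_hCl.2 ⟨h hc, fun _ _ _ _ hag => hag c hc⟩

/-- Closed sets are stable under intersection; intersecting with `𝒞` makes the empty family
yield the largest closed set `𝒞`. -/
theorem hCl_sInter (F : Set (Set Crit)) (hF : ∀ C ∈ F, C = hCl val 𝒞 r C) :
    𝒞 ∩ ⋂₀ F = hCl val 𝒞 r (𝒞 ∩ ⋂₀ F) := by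
  refine (subset_hCl Set.inter_subset_left).antisymm fun c hc => ⟨(mem_hCl.1 hc).1, fun C hC => ?_⟩
  rw [hF C hC]
  exact hCl_mono (Set.inter_subset_right.trans (Set.sInter_subset_of_mem hC)) hc

namespace SkylineConcept

theorem intent_eq_hCl (a : SkylineConcept val 𝒞 r) : a.intent = hCl val 𝒞 r a.intent := by
  obtain ⟨π, rfl, h, -⟩ := a.isSkylineConcept
  exact h

theorem extent_eq_PiS (a : SkylineConcept val 𝒞 r) :
    a.extent = PiS val a.intent r (gPart val r a.intent) := by
  obtain ⟨π, rfl, -, h⟩ := a.isSkylineConcept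
  exact h

theorem ext_intent {a b : SkylineConcept val 𝒞 r} (h : a.intent = b.intent) : a = b := by
  have he : a.extent = b.extent := by rw [a.extent_eq_PiS, b.extent_eq_PiS, h]
  cases a; cases b; cases h; cases he; rfl

/-- The Skyline concept whose intent is a given closed set. -/
def ofClosed (C : Set Crit) (h : C = hCl val 𝒞 r C) : SkylineConcept val 𝒞 r :=
  ⟨C, PiS val C r (gPart val r C), _, rfl, h, rfl⟩

instance : PartialOrder (SkylineConcept val 𝒞 r) where
  le a b := a.intent ⊆ b.intent
  le_refl _ := subset_rfl
  le_trans _ _ _ := Set.Subset.trans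
  le_antisymm _ _ h h' := ext_intent (h.antisymm h')

/-- The infimum of a family has as intent the intersection, within `𝒞`, of the intents. -/
instance : InfSet (SkylineConcept val 𝒞 r) where
  sInf S := ofClosed (𝒞 ∩ ⋂₀ (intent '' S)) <| hCl_sInter _ <| by
    rintro _ ⟨a, -, rfl⟩
    exact a.intent_eq_hCl

theorem isGLB_sInf_family (S : Set (SkylineConcept val 𝒞 r)) : IsGLB S (sInf S) := by
  constructor
  · intro a ha c hc
    exact hc.2 _ ⟨a, ha, rfl⟩
  · intro b hb c hc
    refine ⟨?_, ?_⟩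
    · rw [b.intent_eq_hCl] at hc
      exact hc.1
    · rintro _ ⟨a, ha, rfl⟩
      exact hb ha hc

end SkylineConcept

theorem AgreeConcept.ext_intent {a b : AgreeConcept val 𝒞 r} (h : a.intent = b.intent) :
    a = b := by
  have he : a.extent = b.extent := by rw [a.extent_eq, b.extent_eq, h]
  cases a; cases b; cases h; cases he; rfl

/-- The map `(C, π) ↦ (C, Π-S_C(π))`; its inverse sends a Skyline concept with intent `C` to
`(C, g(C))`. -/
def agreeEquivSkyline : AgreeConcept val 𝒞 r ≃ SkylineConcept val 𝒞 r where
  toFun a := ⟨a.intent, PiS val a.intent r a.extent, a.extent, a.extent_eq, a.intent_eq, rfl⟩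
  invFun b := ⟨b.intent, gPart val r b.intent, rfl, b.intent_eq_hCl⟩
  left_inv _ := AgreeConcept.ext_intent rfl
  right_inv _ := SkylineConcept.ext_intent rfl

end

/-- The Skyline concepts of `r`, ordered by inclusion of intents, form a complete lattice,
and `(C, π) ↦ (C, Π-S_C(π))` is an order isomorphism from the agree concepts lattice onto
the Skyline concepts lattice. -/
theorem skylineConcepts_completeLattice_and_orderIso {T Crit : Type*} (𝒞 : Finset Crit)
    (val : T → Crit → ℝ) (r : Finset T) :
    ∃ L : CompleteLattice (SkylineConcept val (↑𝒞 : Set Crit) (↑r : Set T)),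
      (∀ a b, L.le a b ↔ a.intent ⊆ b.intent) ∧
      ∃ e : AgreeConcept val (↑𝒞 : Set Crit) (↑r : Set T) ≃o
          SkylineConcept val (↑𝒞 : Set Crit) (↑r : Set T),
        ∀ a, (e a).intent = a.intent ∧ (e a).extent = PiS val a.intent ↑r a.extent := by
  exact ⟨completeLatticeOfInf _ SkylineConcept.isGLB_sInf_family, fun _ _ => Iff.rfl,
    ⟨agreeEquivSkyline, Iff.rfl⟩, fun _ => ⟨rfl, rfl⟩⟩
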